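/- Let f : M → M be an expansive homeomorphism of a compact metric space with expansivity constant α > 0, let x ∈ M, and let V ⊆ U be neighborhoods of x. Assume there exists ε with 0 < 2ε < α such that for every y ∈ U one has cc_y(W^s(y) ∩ U) ⊆ W^s_ε(y) and cc_y(W^u(y) ∩ U) ⊆ W^u_ε(y). Then there exist ρ > 0 and a neighborhood W ⊆ V of x such that for all y, z ∈ W, every point of cc_y(W^s(y) ∩ U) ∩ (U \ V) is at distance greater than ρ from every point of cc_z(W^u(z) ∩ U) ∩ (U \ V). -/

import Mathlib

open Metric Set

variable {M : Type*} [MetricSpace M]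

/-- Iterates of a homeomorphism, indexed by `ℤ`. -/
def iterZ (f : M ≃ₜ M) (k : ℤ) (x : M) : M := (f.toEquiv ^ k) x

/-- `f` is expansive with expansivity constant `α`. -/
def IsExpansive (f : M ≃ₜ M) (α : ℝ) : Prop :=
  ∀ x y : M, x ≠ y → ∃ k : ℤ, α < dist (iterZ f k x) (iterZ f k y)

/-- Stable set of `x`. -/
def Ws (f : M ≃ₜ M) (x : M) : Set M :=
  {y | Filter.Tendsto (fun k : ℤ => dist (iterZ f k x) (iterZ f k y)) Filter.atTop (nhds 0)}

/-- Unstable set of `x`. -/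
def Wu (f : M ≃ₜ M) (x : M) : Set M :=
  {y | Filter.Tendsto (fun k : ℤ => dist (iterZ f k x) (iterZ f k y)) Filter.atBot (nhds 0)}

/-- Local (`ε`-local) stable set of `x`. -/
def WsLoc (f : M ≃ₜ M) (ε : ℝ) (x : M) : Set M :=
  {y | ∀ k : ℤ, 0 ≤ k → dist (iterZ f k x) (iterZ f k y) ≤ ε}

/-- Local (`ε`-local) unstable set of `x`. -/
def WuLoc (f : M ≃ₜ M) (ε : ℝ) (x : M) : Set M :=
  {y | ∀ k : ℤ, k ≤ 0 → dist (iterZ f k x) (iterZ f k y) ≤ ε}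

/-- The model space `ℝ^r × ℝ^{n-r}`. -/
abbrev ModelSp (n r : ℕ) := (Fin r → ℝ) × (Fin (n - r) → ℝ)

/-- The model hyperbolic linear map `L(a,b) = (a/2, 2b)`. -/
noncomputable def modelL (n r : ℕ) : ModelSp n r → ModelSp n r :=
  fun q => (fun i => q.1 i / 2, fun i => 2 * q.2 i)

/-- Topologically hyperbolic periodic points of index `r` (`Per_H^r`). -/
def PerHr (f : M ≃ₜ M) (n r : ℕ) : Set M :=
  {p | ∃ l : ℕ, 1 ≤ l ∧ (f.toEquiv ^ l) p = p ∧
    ∃ (U : Set M) (V : Set (ModelSp n r)) (h : U ≃ₜ V),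
      IsOpen U ∧ IsOpen V ∧ (0 : ModelSp n r) ∈ V ∧
      ∃ hp : p ∈ U, ((h ⟨p, hp⟩ : V) : ModelSp n r) = 0 ∧
        ∀ z : M, ∀ hz : z ∈ U, ∀ hz' : (f.toEquiv ^ l) z ∈ U,
          ((h ⟨(f.toEquiv ^ l) z, hz'⟩ : V) : ModelSp n r) = modelL n r (h ⟨z, hz⟩)}

/-- All topologically hyperbolic periodic points (`Per_H`). -/
def PerH (f : M ≃ₜ M) (n : ℕ) : Set M := ⋃ r ∈ Finset.range (n + 1), PerHr f n r

/-- `p` admits a local product structure. -/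
def AdmitsLPS (f : M ≃ₜ M) (n : ℕ) (p : M) : Prop :=
  ∃ (k : ℕ) (h : (Fin k → ℝ) × (Fin (n - k) → ℝ) → M) (ε : ℝ),
    0 < ε ∧ Topology.IsEmbedding h ∧ p ∈ Set.range h ∧
    ∀ x : Fin k → ℝ, ∀ y : Fin (n - k) → ℝ,
      h '' ({x} ×ˢ univ) = WsLoc f ε (h (x, y)) ∩ Set.range h ∧
      h '' (univ ×ˢ {y}) = WuLoc f ε (h (x, y)) ∩ Set.range h

/-!
An expansive homeomorphism with constant `α > ε` satisfies `W^s_ε(x) ∩ W^u_ε(x) ⊆ {x}`, while the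
relations `a ∈ W^s_ε(y)` and `b ∈ W^u_ε(z)` are closed. Hence the quintuples `(ρ, y, z, a, b)`
with `a ∈ W^s_ε(y)`, `b ∈ W^u_ε(z)` and `dist a b ≤ ρ` form a closed set. For a compact `K` not
containing `x`, this set misses `{(0, x, x)} × K × K`, so by compactness of `K × K` it misses
`N × K × K` for some neighborhood `N` of `(0, x, x)`; this applies to `K = closure (U \ V)`.
-/

open Filter Topology

theorem eventually_nhds_zero_eventually_forall_lt_dist {X Y E : Type*} [TopologicalSpace X]
    [TopologicalSpace Y] [PseudoMetricSpace E] {R : Set (X × E)} {S : Set (Y × E)}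
    (hR : IsClosed R) (hS : IsClosed S) {K : Set E} (hK : IsCompact K) {x : X} {y : Y}
    (hRS : ∀ a ∈ K, (x, a) ∈ R → (y, a) ∉ S) :
    ∀ᶠ ρ in 𝓝 (0 : ℝ), ∀ᶠ p in 𝓝 (x, y),
      ∀ a ∈ K, ∀ b ∈ K, (p.1, a) ∈ R → (p.2, b) ∈ S → ρ < dist a b := by
  let C : Set ((ℝ × X × Y) × E × E) :=
    {q | (q.1.2.1, q.2.1) ∈ R ∧ (q.1.2.2, q.2.2) ∈ S ∧ dist q.2.1 q.2.2 ≤ q.1.1}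
  have hC : IsClosed C :=
    (hR.preimage (by fun_prop)).inter <| (hS.preimage (by fun_prop)).inter <|
      isClosed_le (continuous_dist.comp continuous_snd) continuous_fst.fst
  have fiber_notMem : ∀ c ∈ K ×ˢ K, ((0, x, y), c) ∉ C := by
    rintro ⟨a, b⟩ ⟨ha, -⟩ ⟨haR, hbS, hab⟩
    have hab : Inseparable a b := Metric.inseparable_iff.2 (hab.antisymm dist_nonneg)
    exact hRS a ha haR (((Inseparable.refl y).prod hab).mem_closed_iff hS |>.2 hbS)
  have tube : ∀ᶠ q in 𝓝 ((0 : ℝ), x, y), ∀ c ∈ K ×ˢ K, (q, c) ∉ C :=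
    (hK.prod hK).eventually_forall_of_forall_eventually fun c hc ↦
      hC.isOpen_compl.mem_nhds (fiber_notMem c hc)
  filter_upwards [tube.curry_nhds] with ρ hρ
  filter_upwards [hρ] with p hp a ha b hb haR hbS
  exact not_le.1 fun hab ↦ hp (a, b) ⟨ha, hb⟩ ⟨haR, hbS, hab⟩

theorem iterZ_eq_zpow (f : M ≃ₜ M) (k : ℤ) : iterZ f k = ⇑(f ^ k) := by
  let toPerm : (M ≃ₜ M) →* Equiv.Perm M := MonoidHom.mk' Homeomorph.toEquiv fun _ _ ↦ rfl
  exact congrArg DFunLike.coe (map_zpow toPerm f k).symm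

@[fun_prop]
theorem continuous_iterZ (f : M ≃ₜ M) (k : ℤ) : Continuous (iterZ f k) :=
  iterZ_eq_zpow f k ▸ (f ^ k).continuous

theorem isClosed_setOf_forall_mem_dist_iterZ_le (f : M ≃ₜ M) (I : Set ℤ) (ε : ℝ) :
    IsClosed {p : M × M | ∀ k ∈ I, dist (iterZ f k p.1) (iterZ f k p.2) ≤ ε} := by
  simp only [ofPred_forall]
  refine isClosed_biInter fun k _ ↦ isClosed_le ?_ continuous_const
  fun_prop

theorem isClosed_setOf_mem_wsLoc (f : M ≃ₜ M) (ε : ℝ) :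
    IsClosed {p : M × M | p.2 ∈ WsLoc f ε p.1} :=
  isClosed_setOf_forall_mem_dist_iterZ_le f (Ici 0) ε

theorem isClosed_setOf_mem_wuLoc (f : M ≃ₜ M) (ε : ℝ) :
    IsClosed {p : M × M | p.2 ∈ WuLoc f ε p.1} :=
  isClosed_setOf_forall_mem_dist_iterZ_le f (Iic 0) ε

theorem IsExpansive.wsLoc_inter_wuLoc_subset {f : M ≃ₜ M} {α ε : ℝ} (hexp : IsExpansive f α)
    (hεα : ε < α) (x : M) : WsLoc f ε x ∩ WuLoc f ε x ⊆ {x} := by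
  rintro a ⟨hs, hu⟩
  by_contra hax
  obtain ⟨k, hk⟩ := hexp x a (Ne.symm hax)
  have hle : dist (iterZ f k x) (iterZ f k a) ≤ ε := (le_total 0 k).elim (hs k) (hu k)
  exact (hεα.trans hk).not_ge hle

theorem IsExpansive.exists_forall_wsLoc_wuLoc_lt_dist {f : M ≃ₜ M} {α ε : ℝ}
    (hexp : IsExpansive f α) (hεα : ε < α) {K : Set M} (hK : IsCompact K) {x : M} (hx : x ∉ K) :
    ∃ ρ > 0, ∃ W ∈ 𝓝 x, ∀ y ∈ W, ∀ z ∈ W,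
      ∀ a ∈ WsLoc f ε y ∩ K, ∀ b ∈ WuLoc f ε z ∩ K, ρ < dist a b := by
  have disjoint_at_x : ∀ a ∈ K, a ∈ WsLoc f ε x → a ∉ WuLoc f ε x := fun a ha hs hu ↦
    hx (hexp.wsLoc_inter_wuLoc_subset hεα x ⟨hs, hu⟩ ▸ ha)
  have separated := eventually_nhds_zero_eventually_forall_lt_dist (isClosed_setOf_mem_wsLoc f ε)
    (isClosed_setOf_mem_wuLoc f ε) hK disjoint_at_x
  obtain ⟨ρ, hρ, hρ_pos⟩ :=
    ((separated.filter_mono nhdsWithin_le_nhds).and (self_mem_nhdsWithin (s := Ioi 0))).exists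
  rw [nhds_prod_eq] at hρ
  obtain ⟨W, hW, hρW⟩ := eventually_prod_self_iff'.1 hρ
  exact ⟨ρ, hρ_pos, W, hW, fun y hy z hz a ha b hb ↦ hρW y hy z hz a ha.2 b hb.2 ha.1 hb.1⟩

theorem stmt6_general {f : M ≃ₜ M} {α ε : ℝ} (hexp : IsExpansive f α) (hεα : ε < α)
    {x : M} {U V : Set M} (hV : V ∈ 𝓝 x) (hUV : IsCompact (closure (U \ V)))
    (hs : ∀ y ∈ V, connectedComponentIn (Ws f y ∩ U) y ⊆ WsLoc f ε y)
    (hu : ∀ y ∈ V, connectedComponentIn (Wu f y ∩ U) y ⊆ WuLoc f ε y) :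
    ∃ ρ : ℝ, 0 < ρ ∧ ∃ W ∈ 𝓝 x, W ⊆ V ∧
      ∀ y ∈ W, ∀ z ∈ W,
        ∀ a ∈ connectedComponentIn (Ws f y ∩ U) y ∩ (U \ V),
          ∀ b ∈ connectedComponentIn (Wu f z ∩ U) z ∩ (U \ V), ρ < dist a b := by
  have hx : x ∉ closure (U \ V) := by
    rw [mem_closure_iff_nhds]
    push Not
    exact ⟨V, hV, by simp⟩
  obtain ⟨ρ, hρ, W, hW, hdist⟩ := hexp.exists_forall_wsLoc_wuLoc_lt_dist hεα hUV hx
  exact ⟨ρ, hρ, W ∩ V, inter_mem hW hV, inter_subset_right, fun y hy z hz a ha b hb ↦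
    hdist y hy.1 z hz.1 a ⟨hs y hy.2 ha.1, subset_closure ha.2⟩
      b ⟨hu z hz.2 hb.1, subset_closure hb.2⟩⟩

/-- **"Big angles" between local stable and unstable sets.** -/
theorem stmt6 {M : Type*} [MetricSpace M] [CompactSpace M]
    (f : M ≃ₜ M) (α : ℝ) (hα : 0 < α) (hexp : IsExpansive f α)
    (x : M) (U V : Set M) (hU : U ∈ nhds x) (hV : V ∈ nhds x) (hVU : V ⊆ U)
    (ε : ℝ) (hε : 0 < ε) (hεα : 2 * ε < α)
    (hs : ∀ y ∈ U, connectedComponentIn (Ws f y ∩ U) y ⊆ WsLoc f ε y)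
    (hu : ∀ y ∈ U, connectedComponentIn (Wu f y ∩ U) y ⊆ WuLoc f ε y) :
    ∃ ρ : ℝ, 0 < ρ ∧ ∃ W ∈ nhds x, W ⊆ V ∧
      ∀ y ∈ W, ∀ z ∈ W,
        ∀ a ∈ connectedComponentIn (Ws f y ∩ U) y ∩ (U \ V),
          ∀ b ∈ connectedComponentIn (Wu f z ∩ U) z ∩ (U \ V), ρ < dist a b :=
  stmt6_general hexp (by linarith) hV isClosed_closure.isCompact
    (fun y hy ↦ hs y (hVU hy)) fun y hy ↦ hu y (hVU hy)
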